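/- arXiv:2105.10078 — 3 statements merged into one kernel-verified Lean document; each statement's English description precedes it below -/
import Mathlib

section
/- Let 𝒜 be an abelian category with enough projectives and suppose N is a Gorenstein 2-syzygy of an object M, i.e., there is an exact sequence 0 → N → G₁ → G₀ → M → 0 in 𝒜 with G₁ and G₀ Gorenstein projective. Then there exist exact sequences 0 → N → H₁ → P₁ → M → 0 and 0 → N → P₂ → H₂ → M → 0 in 𝒜 with P₁, P₂ projective and H₁, H₂ Gorenstein projective. -/
/-!
The two required sequences are obtained by one pullback and one pushout. Choose a short exact
sequence `0 → K → P → G₀ → 0` with `P` projective and `K` Gorenstein projective; the pullback `H₁`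
of `P → G₀ ← G₁` is an extension of `G₁` by `K`, and `0 → N → H₁ → P → M → 0` is exact. Dually,
for `0 → G₁ → P → C → 0` with `C` Gorenstein projective, the pushout `H₂` of `P ← G₁ → G₀` is an
extension of `C` by `G₀`, and `0 → N → P → H₂ → M → 0` is exact.

It remains to see that Gorenstein projectives are closed under extensions. A class of objects is
called `GorensteinClosed` here if all its members satisfy `Ext¹(X, Q) = 0` for `Q` projective, and
each member is both a quotient of a projective with kernel in the class, and a subobject of a
projective with cokernel in the class. Splicing the resulting short exact sequences shows that such
a class consists of Gorenstein projectives (`GorensteinClosed.isGorensteinProjective`). Conversely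
the class of all Gorenstein projectives is `GorensteinClosed`, and by the horseshoe lemma and its
dual so is the class of extensions of two objects of a `GorensteinClosed` class
(`GorensteinClosed.extension`).
-/

open CategoryTheory CategoryTheory.Limits

/-- An object `G` of an abelian category is *Gorenstein projective* if there is an exact
complex `⋯ → P₁ → P₀ → P₋₁ → ⋯` of projective objects (here `d i : P (i+1) ⟶ P i`),
which stays exact after applying `Hom(-, Q)` for every projective `Q`, such that `G` is
isomorphic to the image of the differential `P₀ → P₋₁`. -/
def IsGorensteinProjective {𝒜 : Type*} [Category 𝒜] [Abelian 𝒜] (G : 𝒜) : Prop :=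
  ∃ (P : ℤ → 𝒜) (d : ∀ i : ℤ, P (i + 1) ⟶ P i),
    (∀ i, Projective (P i)) ∧
    (∀ i, ∃ w : d (i + 1) ≫ d i = 0, (ShortComplex.mk (d (i + 1)) (d i) w).Exact) ∧
    (∀ (Q : 𝒜), Projective Q → ∀ i : ℤ,
      Function.Exact (fun g : P i ⟶ Q => d i ≫ g) (fun g : P (i + 1) ⟶ Q => d (i + 1) ≫ g)) ∧
    Nonempty (G ≅ Limits.image (d (-1)))
/-- `IsFourTermExact f g h` says that `0 → N → A → B → M → 0` is an exact sequence,
i.e. `f` is a monomorphism, `h` is an epimorphism and the sequence is exact at `A` and `B`. -/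
def IsFourTermExact {𝒜 : Type*} [Category 𝒜] [Abelian 𝒜] {N A B M : 𝒜}
    (f : N ⟶ A) (g : A ⟶ B) (h : B ⟶ M) : Prop :=
  Mono f ∧ Epi h ∧ ∃ (w₁ : f ≫ g = 0) (w₂ : g ≫ h = 0),
    (ShortComplex.mk f g w₁).Exact ∧ (ShortComplex.mk g h w₂).Exact


section

universe v u

variable {𝒜 : Type u} [Category.{v} 𝒜] [Abelian 𝒜]

/-! ### Short exact sequences -/

/-- `0 → A → B → C → 0` is a short exact sequence. -/
def SES {A B C : 𝒜} (f : A ⟶ B) (g : B ⟶ C) : Prop :=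
  ∃ w : f ≫ g = 0, (ShortComplex.mk f g w).ShortExact

namespace SES

variable {A B C : 𝒜} {f : A ⟶ B} {g : B ⟶ C}

lemma w (h : SES f g) : f ≫ g = 0 := h.1

lemma mono (h : SES f g) : Mono f := h.2.mono_f

lemma epi (h : SES f g) : Epi g := h.2.epi_g

lemma lift (h : SES f g) {T : 𝒜} (x : T ⟶ B) (hx : x ≫ g = 0) : ∃ l : T ⟶ A, l ≫ f = x := by
  have := h.2.mono_f
  exact ⟨h.2.exact.lift x hx, h.2.exact.lift_f x hx⟩

lemma desc (h : SES f g) {T : 𝒜} (x : B ⟶ T) (hx : f ≫ x = 0) : ∃ l : C ⟶ T, g ≫ l = x := by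
  have := h.2.epi_g
  exact ⟨h.2.exact.desc x hx, h.2.exact.g_desc x hx⟩

lemma of_lift (hf : Mono f) (hg : Epi g) (w : f ≫ g = 0)
    (hl : ∀ {T : 𝒜} (x : T ⟶ B), x ≫ g = 0 → ∃ l : T ⟶ A, l ≫ f = x) : SES f g := by
  refine ⟨w, ?_⟩
  refine ShortComplex.ShortExact.mk' ?_ hf hg
  rw [ShortComplex.exact_iff_exact_up_to_refinements]
  intro T x hx
  obtain ⟨l, hl⟩ := hl x hx
  exact ⟨T, 𝟙 T, inferInstance, l, by simpa using hl.symm⟩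

lemma op (h : SES f g) : SES g.op f.op :=
  ⟨by rw [← op_comp, h.w, op_zero], h.2.op⟩

lemma unop (h : SES g.op f.op) : SES f g :=
  ⟨Quiver.Hom.op_inj (by simpa using h.w), h.2.unop⟩

lemma kernel {p : B ⟶ C} (hp : Epi p) : SES (Limits.kernel.ι p) p :=
  of_lift inferInstance hp (kernel.condition p) fun x hx => ⟨kernel.lift p x hx, by simp⟩

lemma cokernel {i : A ⟶ B} (hi : Mono i) : SES i (Limits.cokernel.π i) :=
  ⟨cokernel.condition i, ShortComplex.ShortExact.mk' (ShortComplex.cokernelSequence_exact i) hi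
    (inferInstanceAs (Epi (Limits.cokernel.π i)))⟩

end SES

lemma IsFourTermExact.op {N A B M : 𝒜} {f : N ⟶ A} {g : A ⟶ B} {h : B ⟶ M}
    (H : IsFourTermExact f g h) : IsFourTermExact h.op g.op f.op := by
  obtain ⟨hf, hh, w₁, w₂, e₁, e₂⟩ := H
  exact ⟨inferInstance, inferInstance, by rw [← op_comp, w₂, op_zero],
    by rw [← op_comp, w₁, op_zero], e₂.op, e₁.op⟩

lemma IsFourTermExact.unop {N A B M : 𝒜ᵒᵖ} {f : N ⟶ A} {g : A ⟶ B} {h : B ⟶ M}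
    (H : IsFourTermExact f g h) : IsFourTermExact h.unop g.unop f.unop := by
  obtain ⟨hf, hh, w₁, w₂, e₁, e₂⟩ := H
  exact ⟨inferInstance, inferInstance, by rw [← unop_comp, w₂, unop_zero],
    by rw [← unop_comp, w₁, unop_zero], e₂.unop, e₁.unop⟩

/-- Pulling back along `q : P ⟶ G₀` replaces `G₀` by `P` in a four-term exact sequence, and
`G₁` by an extension of `G₁` by the kernel of `q`. -/
lemma IsFourTermExact.exists_pullback {N G₁ G₀ M K P : 𝒜} {f : N ⟶ G₁} {g : G₁ ⟶ G₀} {h : G₀ ⟶ M}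
    (H : IsFourTermExact f g h) {k : K ⟶ P} {q : P ⟶ G₀} (hq : SES k q) :
    ∃ (E : 𝒜) (a : K ⟶ E) (b : E ⟶ G₁) (f' : N ⟶ E) (g' : E ⟶ P),
      SES a b ∧ IsFourTermExact f' g' (q ≫ h) := by
  obtain ⟨hf, hh, w₁, w₂, e₁, e₂⟩ := H
  have := hq.epi
  have := hq.mono
  refine ⟨pullback q g, pullback.lift k 0 (by simp [hq.w]), pullback.snd q g,
    pullback.lift 0 f (by simp [w₁]), pullback.fst q g, ?_, ?_, ?_, ?_, ?_, ?_, ?_⟩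
  · refine SES.of_lift ?_ inferInstance (pullback.lift_snd _ _ _) ?_
    · exact mono_of_mono_fac (pullback.lift_fst _ _ _)
    · intro T x hx
      obtain ⟨l, hl⟩ := hq.lift (x ≫ pullback.fst q g) (by
        rw [Category.assoc, pullback.condition, reassoc_of% hx, zero_comp])
      exact ⟨l, pullback.hom_ext (by simpa [pullback.lift_fst] using hl) (by simp [pullback.lift_snd, hx])⟩
  · exact mono_of_mono_fac (pullback.lift_snd _ _ _)
  · exact epi_comp _ _
  · exact pullback.lift_fst _ _ _
  · rw [← Category.assoc, pullback.condition, Category.assoc, w₂, comp_zero]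
  · rw [ShortComplex.exact_iff_exact_up_to_refinements]
    intro T x hx
    dsimp at x hx
    obtain ⟨T', π, hπ, l, hl⟩ := e₁.exact_up_to_refinements (x ≫ pullback.snd q g) (by
      change (x ≫ pullback.snd q g) ≫ g = 0
      rw [Category.assoc, ← pullback.condition, reassoc_of% hx, zero_comp])
    exact ⟨T', π, hπ, l, pullback.hom_ext (by simp [pullback.lift_fst, hx])
      (by simpa [pullback.lift_snd] using hl)⟩
  · rw [ShortComplex.exact_iff_exact_up_to_refinements]
    intro T x hx
    dsimp at x hx
    obtain ⟨T', π, hπ, l, hl⟩ := e₂.exact_up_to_refinements (x ≫ q) (by simpa using hx)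
    exact ⟨T', π, hπ, pullback.lift (π ≫ x) l (by simpa using hl),
      (pullback.lift_fst _ _ _).symm⟩

lemma IsFourTermExact.exists_pushout {N G₁ G₀ M P C : 𝒜} {f : N ⟶ G₁} {g : G₁ ⟶ G₀} {h : G₀ ⟶ M}
    (H : IsFourTermExact f g h) {e : G₁ ⟶ P} {c : P ⟶ C} (he : SES e c) :
    ∃ (E : 𝒜) (a : G₀ ⟶ E) (b : E ⟶ C) (g' : P ⟶ E) (h' : E ⟶ M),
      SES a b ∧ IsFourTermExact (f ≫ e) g' h' := by
  obtain ⟨E, a, b, f', g', hab, h4⟩ := H.op.exists_pullback he.op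
  exact ⟨E.unop, b.unop, a.unop, g'.unop, f'.unop, SES.unop hab, h4.unop⟩

/-- The preimage in `Y` of the subobject `A` of the quotient `B` of `Y`. -/
lemma SES.exists_preimage {Z Y A B C : 𝒜} {i : Z ⟶ Y} {p : Y ⟶ B} {a : A ⟶ B} {b : B ⟶ C}
    (h : SES i p) (h' : SES a b) :
    ∃ (W : 𝒜) (i₁ : Z ⟶ W) (p₁ : W ⟶ A) (i₂ : W ⟶ Y),
      SES i₁ p₁ ∧ SES i₂ (p ≫ b) ∧ i₁ ≫ i₂ = i := by
  have := h.epi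
  have := h.mono
  have := h'.epi
  have := h'.mono
  refine ⟨pullback p a, pullback.lift i 0 (by simp [h.w]), pullback.snd p a, pullback.fst p a,
    ?_, ?_, pullback.lift_fst _ _ _⟩
  · refine SES.of_lift (mono_of_mono_fac (pullback.lift_fst _ _ _)) inferInstance (pullback.lift_snd _ _ _) ?_
    intro T x hx
    obtain ⟨l, hl⟩ := h.lift (x ≫ pullback.fst p a) (by
      rw [Category.assoc, pullback.condition, reassoc_of% hx, zero_comp])
    exact ⟨l, pullback.hom_ext (by simpa [pullback.lift_fst] using hl) (by simp [pullback.lift_snd, hx])⟩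
  · refine SES.of_lift inferInstance (epi_comp _ _) ?_ ?_
    · rw [← Category.assoc, pullback.condition, Category.assoc, h'.w, comp_zero]
    · intro T x hx
      obtain ⟨l, hl⟩ := h'.lift (x ≫ p) (by simpa using hx)
      exact ⟨pullback.lift x l hl.symm, pullback.lift_fst _ _ _⟩

/-- A case of the nine lemma: for an epimorphism of short exact sequences, the kernels form a short
exact sequence. -/
lemma SES.kernels {A B C PA PB PC ZA ZB ZC : 𝒜}
    {i : A ⟶ B} {p : B ⟶ C} {j : PA ⟶ PB} {r : PB ⟶ PC}
    {kA : ZA ⟶ PA} {πA : PA ⟶ A} {kB : ZB ⟶ PB} {πB : PB ⟶ B} {kC : ZC ⟶ PC} {πC : PC ⟶ C}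
    (h : SES i p) (hP : SES j r) (hA : SES kA πA) (hB : SES kB πB) (hC : SES kC πC)
    (sq₁ : j ≫ πB = πA ≫ i) (sq₂ : r ≫ πC = πB ≫ p) :
    ∃ (u : ZA ⟶ ZB) (v : ZB ⟶ ZC), SES u v := by
  have := h.mono
  have := hP.mono
  have := hP.epi
  have := hA.mono
  have := hA.epi
  have := hB.mono
  have := hC.mono
  obtain ⟨u, hu⟩ := hB.lift (kA ≫ j) (by rw [Category.assoc, sq₁, reassoc_of% hA.w, zero_comp])
  obtain ⟨v, hv⟩ := hC.lift (kB ≫ r) (by rw [Category.assoc, sq₂, reassoc_of% hB.w, zero_comp])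
  refine ⟨u, v, SES.of_lift (mono_of_mono_fac hu) ?_ ?_ ?_⟩
  · rw [epi_iff_surjective_up_to_refinements]
    intro T y
    obtain ⟨T', π, hπ, x, hx⟩ := surjective_up_to_refinements_of_epi r (y ≫ kC)
    obtain ⟨l, hl⟩ := h.lift (x ≫ πB) (by
      rw [Category.assoc, ← sq₂, ← reassoc_of% hx, hC.w, comp_zero, comp_zero])
    obtain ⟨T'', π', hπ', n, hn⟩ := surjective_up_to_refinements_of_epi πA l
    obtain ⟨z, hz⟩ := hB.lift (π' ≫ x - n ≫ j) (by
      rw [Preadditive.sub_comp, Category.assoc, Category.assoc, sq₁, ← hl, reassoc_of% hn, sub_self])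
    refine ⟨T'', π' ≫ π, epi_comp _ _, z, ?_⟩
    rw [← cancel_mono kC]
    simp only [Category.assoc]
    rw [hv, reassoc_of% hz, hx, Preadditive.sub_comp, Category.assoc, Category.assoc, hP.w,
      comp_zero, sub_zero]
  · rw [← cancel_mono kC, Category.assoc, hv, reassoc_of% hu, hP.w, comp_zero, zero_comp]
  · intro T x hx
    obtain ⟨m, hm⟩ := hP.lift (x ≫ kB) (by
      rw [Category.assoc, ← hv, reassoc_of% hx, zero_comp])
    obtain ⟨l, hl⟩ := hA.lift m (by
      rw [← cancel_mono i, Category.assoc, ← sq₁, reassoc_of% hm, hB.w, comp_zero, zero_comp])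
    exact ⟨l, by rw [← cancel_mono kB, Category.assoc, hu, reassoc_of% hl, hm]⟩

lemma SES.cokernels {A B C PA PB PC ZA ZB ZC : 𝒜}
    {i : A ⟶ B} {p : B ⟶ C} {j : PA ⟶ PB} {r : PB ⟶ PC}
    {eA : A ⟶ PA} {cA : PA ⟶ ZA} {eB : B ⟶ PB} {cB : PB ⟶ ZB} {eC : C ⟶ PC} {cC : PC ⟶ ZC}
    (h : SES i p) (hP : SES j r) (hA : SES eA cA) (hB : SES eB cB) (hC : SES eC cC)
    (sq₁ : eA ≫ j = i ≫ eB) (sq₂ : eB ≫ r = p ≫ eC) :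
    ∃ (u : ZA ⟶ ZB) (v : ZB ⟶ ZC), SES u v := by
  obtain ⟨u, v, huv⟩ := SES.kernels h.op hP.op hC.op hB.op hA.op
    (by rw [← op_comp, sq₂, op_comp]) (by rw [← op_comp, sq₁, op_comp])
  exact ⟨v.unop, u.unop, SES.unop huv⟩

lemma SES.biprod (A B : 𝒜) : SES (biprod.inl : A ⟶ A ⊞ B) (biprod.snd : A ⊞ B ⟶ B) :=
  ⟨by simp, (ShortComplex.Splitting.ofHasBinaryBiproduct A B).shortExact⟩

/-! ### Vanishing of `Ext¹` into projectives -/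

/-- `Ext¹(X, Q) = 0` for all projective `Q`, phrased as an extension property: for every short exact
sequence `0 → Z → Y → X → 0`, each morphism `Z ⟶ Q` extends to `Y`. -/
def ExtVanishing (X : 𝒜) : Prop :=
  ∀ ⦃Z Y : 𝒜⦄ (i : Z ⟶ Y) (p : Y ⟶ X), SES i p →
    ∀ (Q : 𝒜), Projective Q → ∀ φ : Z ⟶ Q, ∃ ψ : Y ⟶ Q, i ≫ ψ = φ

lemma ExtVanishing.extension {A B C : 𝒜} {a : A ⟶ B} {b : B ⟶ C} (h : SES a b)
    (hA : ExtVanishing A) (hC : ExtVanishing C) : ExtVanishing B := by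
  intro Z Y i p hip Q hQ φ
  obtain ⟨W, i₁, p₁, i₂, h₁, h₂, rfl⟩ := hip.exists_preimage h
  obtain ⟨φ', hext⟩ := hA i₁ p₁ h₁ Q hQ φ
  obtain ⟨ψ, hψ⟩ := hC i₂ _ h₂ Q hQ φ'
  exact ⟨ψ, by rw [Category.assoc, hψ, hext]⟩

/-- The extension property needs to be tested only on one projective presentation. -/
lemma ExtVanishing.of_presentation {K P X : 𝒜} {ι : K ⟶ P} {π : P ⟶ X} (h : SES ι π)
    (hP : Projective P)
    (hQ : ∀ (Q : 𝒜), Projective Q → ∀ φ : K ⟶ Q, ∃ ψ : P ⟶ Q, ι ≫ ψ = φ) : ExtVanishing X := by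
  intro Z Y i p hip Q hproj φ
  have := hip.epi
  have := hip.mono
  obtain ⟨l, hl⟩ : ∃ l : P ⟶ Y, l ≫ p = π := ⟨Projective.factorThru π p, by simp⟩
  obtain ⟨m, hm⟩ := hip.lift (ι ≫ l) (by rw [Category.assoc, hl, h.w])
  obtain ⟨ψ, hψ⟩ := hQ Q hproj (m ≫ φ)
  -- `Y` is the pushout of `m` and `ι`, so that `φ` and `ψ` glue to a morphism on `Y`.
  have hses : SES (biprod.lift m (-ι)) (biprod.desc i l) := by
    have := h.mono
    have hepi := h.epi
    refine SES.of_lift ?_ ?_ (by simp [hm]) ?_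
    · have : Mono (-ι) := by
        refine Preadditive.mono_of_cancel_zero _ fun x hx => ?_
        rw [← cancel_mono ι, zero_comp]
        simpa using hx
      exact mono_of_mono_fac (biprod.lift_snd m (-ι))
    · refine Preadditive.epi_of_cancel_zero _ fun t ht => ?_
      have h₁ : i ≫ t = 0 := by simpa using biprod.inl ≫= ht
      have h₂ : l ≫ t = 0 := by simpa using biprod.inr ≫= ht
      obtain ⟨t', rfl⟩ := hip.desc t h₁
      have : t' = 0 := by rw [← cancel_epi π, comp_zero, ← h₂, reassoc_of% hl]
      rw [this, comp_zero]
    · intro T x hx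
      have hx' : x ≫ biprod.fst ≫ i + x ≫ biprod.snd ≫ l = 0 := by
        rw [biprod.desc_eq] at hx
        simpa using hx
      obtain ⟨n, hn⟩ := h.lift (x ≫ biprod.snd) (by
        have := hx' =≫ p
        simpa [hip.w, hl] using this)
      refine ⟨-n, ?_⟩
      apply biprod.hom_ext
      · rw [← cancel_mono i]
        have e : x ≫ biprod.fst ≫ i = - (x ≫ biprod.snd ≫ l) := eq_neg_of_add_eq_zero_left hx'
        simp [hm, e, reassoc_of% hn]
      · simp [hn]
  obtain ⟨χ, hχ⟩ := hses.desc (biprod.desc φ ψ) (by simp [hψ])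
  exact ⟨χ, by simpa using biprod.inl ≫= hχ⟩

/-! ### Classes of Gorenstein projectives -/

/-- A class of objects with `Ext¹(-, Q) = 0` for projective `Q`, in which every object has a
syzygy and a cosyzygy (with respect to projectives) that lie again in the class. -/
structure GorensteinClosed (S : 𝒜 → Prop) : Prop where
  extVanishing : ∀ X, S X → ExtVanishing X
  syzygy : ∀ X, S X → ∃ (K P : 𝒜) (ι : K ⟶ P) (π : P ⟶ X), SES ι π ∧ Projective P ∧ S K
  cosyzygy : ∀ X, S X → ∃ (P C : 𝒜) (ι : X ⟶ P) (π : P ⟶ C), SES ι π ∧ Projective P ∧ S C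

/-- A relation that is total on both sides has a bi-infinite chain through any given point. -/
lemma exists_int_chain {α : Type*} (R : α → α → Prop) (hl : ∀ x, ∃ y, R y x)
    (hr : ∀ x, ∃ y, R x y) (a : α) : ∃ X : ℤ → α, X 0 = a ∧ ∀ i, R (X (i + 1)) (X i) := by
  choose l hl using hl
  choose r hr using hr
  refine ⟨fun i => match i with
    | Int.ofNat n => l^[n] a
    | Int.negSucc n => r^[n + 1] a, rfl, ?_⟩
  rintro (n | _ | n)
  · change R (l^[n + 1] a) (l^[n] a)
    rw [Function.iterate_succ_apply']
    exact hl _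
  · exact hr a
  · change R (r^[n + 1] a) (r^[n + 1 + 1] a)
    rw [Function.iterate_succ_apply' r (n + 1)]
    exact hr _

/-- Splicing syzygy and cosyzygy sequences in both directions gives an exact complex of projectives;
it stays exact under `Hom(-, Q)` because `Ext¹(-, Q)` vanishes on all its cycles. -/
theorem GorensteinClosed.isGorensteinProjective {S : 𝒜 → Prop} (hS : GorensteinClosed S)
    {X : 𝒜} (hX : S X) : IsGorensteinProjective X := by
  obtain ⟨Y, hY0, hY⟩ := exists_int_chain (α := {X : 𝒜 // S X})
    (fun K X => ∃ (P : 𝒜) (ι : K.1 ⟶ P) (π : P ⟶ X.1), SES ι π ∧ Projective P)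
    (fun X => by
      obtain ⟨K, P, ι, π, h, hP, hK⟩ := hS.syzygy X.1 X.2
      exact ⟨⟨K, hK⟩, P, ι, π, h, hP⟩)
    (fun X => by
      obtain ⟨P, C, ι, π, h, hP, hC⟩ := hS.cosyzygy X.1 X.2
      exact ⟨⟨C, hC⟩, P, ι, π, h, hP⟩) ⟨X, hX⟩
  choose P ι π h hP using hY
  have hm : ∀ i, Mono (ι i) := fun i => (h i).mono
  have he : ∀ i, Epi (π i) := fun i => (h i).epi
  refine ⟨P, fun i => π (i + 1) ≫ ι i, hP, ?_, ?_, ?_⟩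
  · intro i
    have w : (π (i + 1 + 1) ≫ ι (i + 1)) ≫ π (i + 1) ≫ ι i = 0 := by
      rw [Category.assoc, reassoc_of% (h (i + 1)).w, zero_comp, comp_zero]
    refine ⟨w, ?_⟩
    rw [ShortComplex.exact_iff_exact_up_to_refinements]
    intro T x hx
    dsimp at x hx
    obtain ⟨l, hl⟩ := (h (i + 1)).lift x (by
      rw [← cancel_mono (ι i), Category.assoc, hx, zero_comp])
    obtain ⟨T', q, hq, n, hn⟩ := surjective_up_to_refinements_of_epi (π (i + 1 + 1)) l
    exact ⟨T', q, hq, n, by rw [← hl, reassoc_of% hn]⟩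
  · intro Q hQ i g
    constructor
    · intro hg
      have hg' : ι (i + 1) ≫ g = 0 := by
        rw [← cancel_epi (π (i + 1 + 1)), comp_zero, ← Category.assoc]
        exact hg
      obtain ⟨g', rfl⟩ := (h (i + 1)).desc g hg'
      obtain ⟨ψ, rfl⟩ := hS.extVanishing _ (Y i).2 (ι i) (π i) (h i) Q hQ g'
      exact ⟨ψ, Category.assoc _ _ _⟩
    · rintro ⟨ψ, rfl⟩
      simp [reassoc_of% (h (i + 1)).w]
  · have e : X = (Y 0).1 := by rw [hY0]
    subst e
    let F : MonoFactorisation (π (-1 + 1) ≫ ι (-1)) :=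
      { I := (Y (-1 + 1)).1, m := ι (-1), e := π (-1 + 1) }
    let G : StrongEpiMonoFactorisation (π (-1 + 1) ≫ ι (-1)) :=
      { F with e_strong_epi := strongEpi_of_epi _ }
    exact ⟨G.toMonoIsImage.isoExt (Image.isImage _)⟩

/-- Objects isomorphic to the image of an arbitrary differential of a totally acyclic complex of
projectives. These are the Gorenstein projectives; leaving the position free avoids shifting
complexes. -/
def IsCompleteSyzygy (G : 𝒜) : Prop :=
  ∃ (P : ℤ → 𝒜) (d : ∀ i : ℤ, P (i + 1) ⟶ P i),
    (∀ i, Projective (P i)) ∧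
    (∀ i, ∃ w : d (i + 1) ≫ d i = 0, (ShortComplex.mk (d (i + 1)) (d i) w).Exact) ∧
    (∀ (Q : 𝒜), Projective Q → ∀ i : ℤ,
      Function.Exact (fun g : P i ⟶ Q => d i ≫ g) (fun g : P (i + 1) ⟶ Q => d (i + 1) ≫ g)) ∧
    ∃ i, Nonempty (G ≅ Limits.image (d i))

/-- The short exact sequence `0 → im f → B → im g → 0` for `A → B → C` exact at `B`. -/
lemma SES.images {A B C : 𝒜} {f : A ⟶ B} {g : B ⟶ C} (w : f ≫ g = 0)
    (h : (ShortComplex.mk f g w).Exact) : SES (image.ι f) (factorThruImage g) := by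
  have w' : image.ι f ≫ factorThruImage g = 0 := by
    rw [← cancel_epi (factorThruImage f), ← cancel_mono (image.ι g)]
    simp [w]
  refine ⟨w', ShortComplex.ShortExact.mk' ?_ (inferInstanceAs (Mono (image.ι f)))
    (inferInstanceAs (Epi (factorThruImage g)))⟩
  rw [ShortComplex.exact_iff_exact_up_to_refinements]
  intro T x hx
  dsimp at x hx
  obtain ⟨T', q, hq, n, hn⟩ := h.exact_up_to_refinements x (by
    change x ≫ g = 0
    rw [← image.fac g, reassoc_of% hx, zero_comp])
  exact ⟨T', q, hq, n ≫ factorThruImage f, by simpa using hn⟩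

lemma SES.comp_iso {A B C C' : 𝒜} {f : A ⟶ B} {g : B ⟶ C} (h : SES f g) (e : C ≅ C') :
    SES f (g ≫ e.hom) := by
  have := h.epi
  refine SES.of_lift h.mono (epi_comp _ _) (by rw [reassoc_of% h.w, zero_comp]) fun x hx => ?_
  exact h.lift x (by rw [← cancel_mono e.hom, Category.assoc, hx, zero_comp])

lemma SES.iso_comp {A A' B C : 𝒜} {f : A ⟶ B} {g : B ⟶ C} (h : SES f g) (e : A' ≅ A) :
    SES (e.hom ≫ f) g := by
  have := h.mono
  refine SES.of_lift (mono_comp _ _) h.epi (by rw [Category.assoc, h.w, comp_zero]) fun x hx => ?_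
  obtain ⟨l, hl⟩ := h.lift x hx
  exact ⟨l ≫ e.inv, by simpa using hl⟩

lemma gorensteinClosed_isCompleteSyzygy : GorensteinClosed (IsCompleteSyzygy (𝒜 := 𝒜)) where
  extVanishing := by
    rintro X ⟨P, d, hP, hd, hQ, i, ⟨e⟩⟩
    obtain ⟨w, hex⟩ := hd i
    refine ExtVanishing.of_presentation ((SES.images w hex).comp_iso e.symm) (hP (i + 1)) ?_
    intro Q hproj φ
    obtain ⟨ψ, hψ⟩ := (hQ Q hproj (i + 1) (factorThruImage (d (i + 1)) ≫ φ)).1 (by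
      obtain ⟨w', -⟩ := hd (i + 1)
      have : d (i + 1 + 1) ≫ factorThruImage (d (i + 1)) = 0 := by
        rw [← cancel_mono (image.ι (d (i + 1)))]
        simp [w']
      simp [reassoc_of% this])
    refine ⟨ψ, ?_⟩
    rw [← cancel_epi (factorThruImage (d (i + 1))), image.fac_assoc]
    exact hψ
  syzygy := by
    rintro X ⟨P, d, hP, hd, hQ, i, ⟨e⟩⟩
    obtain ⟨w, hex⟩ := hd i
    exact ⟨_, _, _, _, (SES.images w hex).comp_iso e.symm, hP (i + 1),
      P, d, hP, hd, hQ, i + 1, ⟨Iso.refl _⟩⟩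
  cosyzygy := by
    rintro X ⟨P, d, hP, hd, hQ, i, ⟨e⟩⟩
    obtain ⟨j, rfl⟩ : ∃ j, i = j + 1 := ⟨i - 1, by ring⟩
    obtain ⟨w, hex⟩ := hd j
    exact ⟨_, _, _, _, (SES.images w hex).iso_comp e, hP (j + 1),
      P, d, hP, hd, hQ, j, ⟨Iso.refl _⟩⟩

lemma isCompleteSyzygy_iff (X : 𝒜) : IsCompleteSyzygy X ↔ IsGorensteinProjective X :=
  ⟨gorensteinClosed_isCompleteSyzygy.isGorensteinProjective,
    fun ⟨P, d, hP, hd, hQ, e⟩ => ⟨P, d, hP, hd, hQ, -1, e⟩⟩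

lemma gorensteinClosed_isGorensteinProjective :
    GorensteinClosed (IsGorensteinProjective (𝒜 := 𝒜)) := by
  have : IsGorensteinProjective (𝒜 := 𝒜) = IsCompleteSyzygy :=
    funext fun X => propext (isCompleteSyzygy_iff X).symm
  rw [this]
  exact gorensteinClosed_isCompleteSyzygy

/-! ### Closure under extensions -/

/-- Syzygies of extensions come from the horseshoe lemma. Cosyzygies come from its dual, where the
vanishing of `Ext¹` replaces the lifting property of projectives. -/
lemma GorensteinClosed.extension {S : 𝒜 → Prop} (hS : GorensteinClosed S) :
    GorensteinClosed fun B : 𝒜 =>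
      ∃ (A C : 𝒜) (i : A ⟶ B) (p : B ⟶ C), SES i p ∧ S A ∧ S C where
  extVanishing := by
    rintro B ⟨A, C, i, p, h, hA, hC⟩
    exact ExtVanishing.extension h (hS.extVanishing A hA) (hS.extVanishing C hC)
  syzygy := by
    rintro B ⟨A, C, i, p, h, hA, hC⟩
    obtain ⟨KA, PA, kA, πA, hkA, hPA, hKA⟩ := hS.syzygy A hA
    obtain ⟨KC, PC, kC, πC, hkC, hPC, hKC⟩ := hS.syzygy C hC
    have := h.epi
    have := hkA.epi
    have := hkC.epi
    obtain ⟨s, hs⟩ : ∃ s : PC ⟶ B, s ≫ p = πC := ⟨Projective.factorThru πC p, by simp⟩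
    have hepi : Epi (biprod.desc (πA ≫ i) s) := by
      refine Preadditive.epi_of_cancel_zero _ fun t ht => ?_
      have h₁ : πA ≫ i ≫ t = 0 := by simpa using biprod.inl ≫= ht
      have h₂ : s ≫ t = 0 := by simpa using biprod.inr ≫= ht
      obtain ⟨t', rfl⟩ := h.desc t (by rw [← cancel_epi πA, h₁, comp_zero])
      have : t' = 0 := by rw [← cancel_epi πC, comp_zero, ← h₂, reassoc_of% hs]
      rw [this, comp_zero]
    obtain ⟨u, v, huv⟩ := SES.kernels h (SES.biprod PA PC) hkA (SES.kernel hepi) hkC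
      (by simp) (by ext <;> simp [hs, h.w])
    exact ⟨_, _, _, _, SES.kernel hepi, inferInstance, KA, KC, u, v, huv, hKA, hKC⟩
  cosyzygy := by
    rintro B ⟨A, C, i, p, h, hA, hC⟩
    obtain ⟨PA, CA, eA, cA, hcA, hPA, hCA⟩ := hS.cosyzygy A hA
    obtain ⟨PC, CC, eC, cC, hcC, hPC, hCC⟩ := hS.cosyzygy C hC
    have := hcA.mono
    have := hcC.mono
    -- `A ⟶ PA` extends to `B` because `Ext¹(C, PA) = 0`.
    obtain ⟨t, ht⟩ := hS.extVanishing C hC i p h PA hPA eA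
    have hmono : Mono (biprod.lift t (p ≫ eC)) := by
      refine Preadditive.mono_of_cancel_zero _ fun x hx => ?_
      have h₁ : x ≫ t = 0 := by simpa using hx =≫ biprod.fst
      have h₂ : x ≫ p ≫ eC = 0 := by simpa using hx =≫ biprod.snd
      obtain ⟨l, rfl⟩ := h.lift x (by rw [← cancel_mono eC, Category.assoc, h₂, zero_comp])
      have : l = 0 := by rw [← cancel_mono eA, zero_comp, ← h₁, Category.assoc, ht]
      rw [this, zero_comp]
    obtain ⟨u, v, huv⟩ := SES.cokernels h (SES.biprod PA PC) hcA (SES.cokernel hmono) hcC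
      (by ext <;> simp [ht, reassoc_of% h.w]) (by simp)
    exact ⟨_, _, _, _, SES.cokernel hmono, inferInstance, CA, CC, u, v, huv, hCA, hCC⟩

theorem IsGorensteinProjective.extension {A B C : 𝒜} {i : A ⟶ B} {p : B ⟶ C} (h : SES i p)
    (hA : IsGorensteinProjective A) (hC : IsGorensteinProjective C) : IsGorensteinProjective B :=
  gorensteinClosed_isGorensteinProjective.extension.isGorensteinProjective
    ⟨A, C, i, p, h, hA, hC⟩

end

/-- **Lemma 3.9.** If `N` is a Gorenstein 2-syzygy of `M`, i.e. there is an exact sequence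
`0 → N → G₁ → G₀ → M → 0` with `G₁, G₀` Gorenstein projective, then there are exact sequences
`0 → N → H₁ → P₁ → M → 0` and `0 → N → P₂ → H₂ → M → 0` with `P₁, P₂` projective and
`H₁, H₂` Gorenstein projective. -/
theorem gorenstein_two_syzygy {𝒜 : Type*} [Category 𝒜] [Abelian 𝒜] [EnoughProjectives 𝒜]
    {N G₁ G₀ M : 𝒜} (f : N ⟶ G₁) (g : G₁ ⟶ G₀) (h : G₀ ⟶ M)
    (hG₁ : IsGorensteinProjective G₁) (hG₀ : IsGorensteinProjective G₀)
    (hex : IsFourTermExact f g h) :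
    (∃ (H₁ P₁ : 𝒜) (f' : N ⟶ H₁) (g' : H₁ ⟶ P₁) (h' : P₁ ⟶ M),
      IsFourTermExact f' g' h' ∧ IsGorensteinProjective H₁ ∧ Projective P₁) ∧
    (∃ (P₂ H₂ : 𝒜) (f' : N ⟶ P₂) (g' : P₂ ⟶ H₂) (h' : H₂ ⟶ M),
      IsFourTermExact f' g' h' ∧ Projective P₂ ∧ IsGorensteinProjective H₂) := by
  constructor
  · obtain ⟨K, P, k, q, hkq, hP, hK⟩ := gorensteinClosed_isGorensteinProjective.syzygy G₀ hG₀
    obtain ⟨E, a, b, f', g', hab, h4⟩ := hex.exists_pullback hkq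
    exact ⟨E, P, f', g', q ≫ h, h4, .extension hab hK hG₁, hP⟩
  · obtain ⟨P, C, e, c, hec, hP, hC⟩ := gorensteinClosed_isGorensteinProjective.cosyzygy G₁ hG₁
    obtain ⟨E, a, b, g', h', hab, h4⟩ := hex.exists_pushout hec
    exact ⟨P, E, f ≫ e, g', h', h4, hP, .extension hab hG₀ hC⟩
end

section
/- Let 𝒜 be an abelian category with enough projectives, n a positive integer, and N an object of 𝒜. The following are equivalent: (1) there exists an object M of 𝒜 such that N is a Gorenstein n-syzygy of M; (2) there exist an object L of 𝒜 and an epimorphism L → G in 𝒜 with G Gorenstein projective such that N is an n-syzygy of L. -/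
/-!
Since `0` is Gorenstein projective and every `L ⟶ 0` is an epimorphism, the content of the
theorem is that `N` is a Gorenstein `n`-syzygy of some object iff it is an `n`-syzygy of some
object. One direction holds because projectives are Gorenstein projective
(`isGorensteinProjective_of_projective`).

For the other direction, call `X` *left orthogonal* (`LeftOrth`) if `Ext¹(X, Q) = 0` for every
projective `Q`. The argument uses the classes `Cosyz n` of left orthogonal objects `X` with an
exact sequence `0 → X → P⁰ → ⋯ → Pⁿ⁻¹ → X' → 0`, `Pⁱ` projective, whose successive cokernels
are all left orthogonal. Gorenstein projectives lie in every `Cosyz n`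
(`IsGorensteinProjective.cosyz`), and `Cosyz n` is closed under extensions by a
horseshoe argument (`Cosyz.ext`); working with these classes avoids building complete
resolutions of extensions.

Given `0 → N → G → K → 0` at the left end of a `Cosyz (n+1)`-resolution, embed `G` in a projective
`P` with cokernel `G' ∈ Cosyz n`. Then `K' = P/N` is an extension of `G'` by `K`, and pushing out
along `K → K'` replaces the next term of the resolution by its extension by `G'`
(`IsSyzygyOf.of_extension`). So `0 → N → P → K' → 0`, and `K'` has a `Cosyz n`-resolution of length
one less; induction finishes the proof (`exists_projective_syzygy`).
-/

open CategoryTheory CategoryTheory.Limits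

/-- `IsSyzygyOf cls n N M` says that there is an exact sequence
`0 → N → G_{n-1} → ⋯ → G₁ → G₀ → M → 0` in which every `G i` satisfies the predicate `cls`
(encoded by splitting the exact sequence into short exact sequences). -/
def IsSyzygyOf {𝒜 : Type*} [Category 𝒜] [Abelian 𝒜] (cls : 𝒜 → Prop) : ℕ → 𝒜 → 𝒜 → Prop
  | 0, _, _ => False
  | 1, N, M => ∃ (G : 𝒜) (f : N ⟶ G) (g : G ⟶ M) (w : f ≫ g = 0),
      (ShortComplex.mk f g w).ShortExact ∧ cls G
  | n + 2, N, M => ∃ (G K : 𝒜) (f : N ⟶ G) (g : G ⟶ K) (w : f ≫ g = 0),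
      (ShortComplex.mk f g w).ShortExact ∧ cls G ∧ IsSyzygyOf cls (n + 1) K M

namespace GorSyz

universe v u

variable {𝒜 : Type u} [Category.{v} 𝒜] [Abelian 𝒜]

/-! ### Short exact sequences -/

/-- `0 → A → B → C → 0` is short exact, the vanishing of the composite being part of the
assertion. -/
def SES {A B C : 𝒜} (f : A ⟶ B) (g : B ⟶ C) : Prop :=
  ∃ w : f ≫ g = 0, (ShortComplex.mk f g w).ShortExact

namespace SES

variable {A B C : 𝒜} {f : A ⟶ B} {g : B ⟶ C}

lemma zero (h : SES f g) : f ≫ g = 0 := h.1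

lemma mono (h : SES f g) : Mono f := h.2.mono_f

lemma epi (h : SES f g) : Epi g := h.2.epi_g

lemma desc (h : SES f g) {T : 𝒜} (t : B ⟶ T) (ht : f ≫ t = 0) : ∃ s, g ≫ s = t :=
  ⟨h.2.gIsCokernel.desc (CokernelCofork.ofπ t ht),
    h.2.gIsCokernel.fac (CokernelCofork.ofπ t ht) WalkingParallelPair.one⟩

lemma lift (h : SES f g) {T : 𝒜} (t : T ⟶ B) (ht : t ≫ g = 0) : ∃ s, s ≫ f = t :=
  ⟨h.2.fIsKernel.lift (KernelFork.ofι t ht),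
    h.2.fIsKernel.fac (KernelFork.ofι t ht) WalkingParallelPair.zero⟩

lemma of_desc (w : f ≫ g = 0) [Mono f] [Epi g]
    (H : ∀ (T : 𝒜) (t : B ⟶ T), f ≫ t = 0 → ∃ s, g ≫ s = t) : SES f g :=
  ⟨w, { exact := ShortComplex.exact_of_g_is_cokernel _
          (CokernelCofork.IsColimit.ofπ' g w fun t ht => ⟨(H _ t ht).choose, (H _ t ht).choose_spec⟩)
        mono_f := ‹_›
        epi_g := ‹_› }⟩

lemma of_lift (w : f ≫ g = 0) [Mono f] [Epi g]
    (H : ∀ (T : 𝒜) (t : T ⟶ B), t ≫ g = 0 → ∃ s, s ≫ f = t) : SES f g :=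
  ⟨w, { exact := ShortComplex.exact_of_f_is_kernel _
          (KernelFork.IsLimit.ofι' f w fun t ht => ⟨(H _ t ht).choose, (H _ t ht).choose_spec⟩)
        mono_f := ‹_›
        epi_g := ‹_› }⟩

/-- The pushout of a short exact sequence along a map out of its left term. -/
lemma cobaseChange {A' B' : 𝒜} {i : A ⟶ A'} {f' : A' ⟶ B'} {j : B ⟶ B'} (h : SES f g)
    (sq : IsPushout i f f' j) : ∃ g' : B' ⟶ C, j ≫ g' = g ∧ SES f' g' := by
  have := h.mono
  have := h.epi
  have hj : j ≫ sq.desc 0 g (by simp [h.zero]) = g := sq.inr_desc _ _ _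
  have : Mono f' :=
    MorphismProperty.of_isPushout (P := MorphismProperty.monomorphisms 𝒜) sq ‹Mono f›
  have : Epi (sq.desc 0 g (by simp [h.zero])) := epi_of_epi_fac hj
  refine ⟨_, hj, of_desc (sq.inl_desc _ _ _) fun T t ht => ?_⟩
  obtain ⟨s, hs⟩ := h.desc (j ≫ t) (by rw [← Category.assoc, ← sq.w, Category.assoc, ht, comp_zero])
  exact ⟨s, sq.hom_ext (by simp [ht]) (by rw [reassoc_of% hj, hs])⟩

/-- For subobjects `N ⊆ G ⊆ P` with `K = G/N` and `G' = P/G`, the quotient `K' = P/N` is an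
extension of `G'` by `K`. -/
lemma third_iso {N G K P G' : 𝒜} {a : N ⟶ G} {g : G ⟶ K} {i : G ⟶ P} {p : P ⟶ G'}
    (h₁ : SES a g) (h₂ : SES i p) :
    ∃ (K' : 𝒜) (b : N ⟶ P) (c : P ⟶ K') (k : K ⟶ K') (q : K' ⟶ G'), SES b c ∧ SES k q := by
  have sq := IsPushout.of_hasPushout g i
  obtain ⟨q, -, hq⟩ := h₂.cobaseChange sq
  have := h₁.mono
  have := h₁.epi
  have := h₂.mono
  refine ⟨_, a ≫ i, pushout.inr g i, _, q, of_desc ?_ fun T t ht => ?_, hq⟩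
  · rw [Category.assoc, ← sq.w, reassoc_of% h₁.zero, zero_comp]
  · obtain ⟨s, hs⟩ := h₁.desc (i ≫ t) (by simpa using ht)
    exact ⟨sq.desc s t hs, sq.inr_desc _ _ _⟩

end SES

/-! ### Objects left orthogonal to projectives -/

/-- `Ext¹(X, Q) = 0` for every projective `Q`, phrased as: maps to projectives extend along every
monomorphism with cokernel `X`. -/
def LeftOrth (X : 𝒜) : Prop :=
  ∀ (Q : 𝒜), Projective Q → ∀ (A B : 𝒜) (f : A ⟶ B) (g : B ⟶ X), SES f g →
    ∀ φ : A ⟶ Q, ∃ ψ : B ⟶ Q, f ≫ ψ = φ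

lemma LeftOrth.ext {X Y Z : 𝒜} {u : X ⟶ Y} {v : Y ⟶ Z} (h : SES u v) (hX : LeftOrth X)
    (hZ : LeftOrth Z) : LeftOrth Y := by
  intro Q hQ A B f g hfg φ
  have := h.mono
  have := h.epi
  have := hfg.mono
  have := hfg.epi
  -- The preimage `B'` of `X` in `B` is an extension of `X` by `A`, and `B` is an extension of `Z`
  -- by `B'`; the map extends from `A` to `B'` and then to `B`.
  have h₁ : SES (pullback.lift f 0 (by simp [hfg.zero])) (pullback.snd g u) := by
    have : Mono (pullback.lift f 0 (by simp [hfg.zero]) : A ⟶ pullback g u) :=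
      mono_of_mono_fac (pullback.lift_fst f 0 _)
    refine SES.of_lift (pullback.lift_snd _ _ _) fun T t ht => ?_
    obtain ⟨s, hs⟩ := hfg.lift (t ≫ pullback.fst g u)
      (by rw [Category.assoc, pullback.condition, reassoc_of% ht, zero_comp])
    exact ⟨s, pullback.hom_ext
      (by rw [Category.assoc, pullback.lift_fst, hs])
      (by rw [Category.assoc, pullback.lift_snd, comp_zero, ht])⟩
  have h₂ : SES (pullback.fst g u) (g ≫ v) := by
    have : Epi (g ≫ v) := epi_comp _ _
    refine SES.of_lift (by rw [pullback.condition_assoc, h.zero, comp_zero]) fun T t ht => ?_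
    obtain ⟨s, hs⟩ := h.lift (t ≫ g) (by simpa using ht)
    exact ⟨pullback.lift t s hs.symm, pullback.lift_fst _ _ _⟩
  obtain ⟨ψ', hψ'⟩ := hX Q hQ _ _ _ _ h₁ φ
  obtain ⟨ψ, hψ⟩ := hZ Q hQ _ _ _ _ h₂ ψ'
  exact ⟨ψ, by rw [← hψ', ← hψ, pullback.lift_fst_assoc]⟩

/-- `Ext¹(X, Q)` is the cokernel of `Hom(P, Q) → Hom(K, Q)` for `0 → K → P → X → 0` with `P`
projective. -/
lemma LeftOrth.of_presentation {K P X : 𝒜} {κ : K ⟶ P} {π : P ⟶ X} (h : SES κ π)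
    [Projective P] (H : ∀ Q : 𝒜, Projective Q → ∀ φ : K ⟶ Q, ∃ ψ : P ⟶ Q, κ ≫ ψ = φ) :
    LeftOrth X := by
  intro Q hQ A B f g hfg φ
  have := hfg.mono
  have := hfg.epi
  have := h.epi
  have hl : Projective.factorThru π g ≫ g = π := Projective.factorThru_comp _ _
  set l := Projective.factorThru π g
  obtain ⟨m, hm⟩ := hfg.lift (κ ≫ l) (by rw [Category.assoc, hl, h.zero])
  obtain ⟨e, he⟩ := H Q hQ (m ≫ φ)
  -- `B` is the quotient of `A ⊞ P` by `K`, so `(φ, e)` descends to `B`.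
  have hepi : Epi (biprod.desc f l) := by
    refine Preadditive.epi_of_cancel_zero _ fun {T} t ht => ?_
    have h1 : f ≫ t = 0 := by simpa using biprod.inl ≫= ht
    have h2 : l ≫ t = 0 := by simpa using biprod.inr ≫= ht
    obtain ⟨s, rfl⟩ := hfg.desc t h1
    rw [reassoc_of% hl] at h2
    rw [(cancel_epi π).1 (h2.trans comp_zero.symm), comp_zero]
  have hker : kernel.ι (biprod.desc f l) ≫ biprod.desc φ e = 0 := by
    have h0 := kernel.condition (biprod.desc f l)
    generalize kernel.ι (biprod.desc f l) = k at h0 ⊢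
    generalize kernel (biprod.desc f l) = T at k h0
    rw [biprod.desc_eq, Preadditive.comp_add] at h0
    obtain ⟨s, hs⟩ := h.lift (k ≫ biprod.snd) (by
      have := h0 =≫ g
      simpa [hfg.zero, hl] using this)
    have h1 : k ≫ biprod.fst = -(s ≫ m) := by
      rw [← cancel_mono f, Preadditive.neg_comp, Category.assoc, Category.assoc, hm,
        reassoc_of% hs, ← add_eq_zero_iff_eq_neg]
      exact h0
    rw [biprod.desc_eq, Preadditive.comp_add, reassoc_of% h1, ← reassoc_of% hs, he]
    simp
  refine ⟨Abelian.epiDesc (biprod.desc f l) (biprod.desc φ e) hker, ?_⟩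
  have := biprod.inl ≫= Abelian.comp_epiDesc (biprod.desc f l) (biprod.desc φ e) hker
  rwa [biprod.inl_desc_assoc, biprod.inl_desc] at this

/-! ### Iterated cosyzygies -/

/-- `X` is left orthogonal to projectives and has an exact sequence
`0 → X → P⁰ → ⋯ → Pⁿ⁻¹ → X' → 0` with projective `Pⁱ` all of whose cokernels (including `X'`) are
left orthogonal to projectives. -/
def Cosyz : ℕ → 𝒜 → Prop
  | 0, X => LeftOrth X
  | n + 1, X => LeftOrth X ∧ ∃ (P X' : 𝒜) (i : X ⟶ P) (p : P ⟶ X'),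
      Projective P ∧ SES i p ∧ Cosyz n X'

lemma Cosyz.leftOrth {n : ℕ} {X : 𝒜} (h : Cosyz n X) : LeftOrth X := by
  cases n with
  | zero => exact h
  | succ n => exact h.1

lemma Cosyz.pred {n : ℕ} : ∀ {X : 𝒜}, Cosyz (n + 1) X → Cosyz n X := by
  induction n with
  | zero => exact fun h => h.1
  | succ n ih =>
    rintro X ⟨h, P, Y, i, p, hP, hip, hY⟩
    exact ⟨h, P, Y, i, p, hP, hip, ih hY⟩

/-- Horseshoe lemma for cosyzygies. -/
lemma Cosyz.ext {n : ℕ} : ∀ {X Y Z : 𝒜} {u : X ⟶ Y} {v : Y ⟶ Z}, SES u v →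
    Cosyz n X → Cosyz n Z → Cosyz n Y := by
  induction n with
  | zero => exact fun h hX hZ => LeftOrth.ext h hX hZ
  | succ n ih =>
    intro X Y Z u v h hX hZ
    refine ⟨LeftOrth.ext h hX.1 hZ.1, ?_⟩
    obtain ⟨-, PX, X', iX, pX, hPX, hX, hX'⟩ := hX
    obtain ⟨hZo, PZ, Z', iZ, pZ, hPZ, hZ, hZ'⟩ := hZ
    -- The pushout `E` of `Y` along `X → PX` contains `Y` with cokernel `X'`; as an extension of
    -- `Z` by `PX` it splits, hence embeds in `PX ⊞ PZ` with cokernel `Z'`.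
    have sq := IsPushout.of_hasPushout iX u
    obtain ⟨g', -, hE⟩ := h.cobaseChange sq
    obtain ⟨q', -, hY⟩ := hX.cobaseChange sq.flip
    obtain ⟨r, hr⟩ := hZo PX hPX _ _ _ _ hE (𝟙 PX)
    have := hE.epi
    have := hZ.mono
    have := hZ.epi
    have hF : SES (biprod.lift r (g' ≫ iZ)) (biprod.snd ≫ pZ) := by
      have : Mono (biprod.lift r (g' ≫ iZ)) := by
        refine Preadditive.mono_of_cancel_zero _ fun {T} t ht => ?_
        have h1 : t ≫ r = 0 := by simpa using ht =≫ biprod.fst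
        have h2 : t ≫ g' = 0 := by
          rw [← cancel_mono iZ]
          simpa using ht =≫ biprod.snd
        obtain ⟨s, rfl⟩ := hE.lift t h2
        rw [Category.assoc, hr, Category.comp_id] at h1
        rw [h1, zero_comp]
      have : Epi (biprod.snd ≫ pZ : PX ⊞ PZ ⟶ Z') := epi_comp _ _
      refine SES.of_desc (by simp [hZ.zero]) fun T t ht => ?_
      rw [biprod.lift_eq, Preadditive.add_comp] at ht
      simp only [Category.assoc] at ht
      have h1 : biprod.inl ≫ t = 0 := by
        have := pushout.inl iX u ≫= ht
        rw [Preadditive.comp_add, reassoc_of% hr, reassoc_of% hE.zero] at this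
        simpa using this
      rw [h1, comp_zero, zero_add] at ht
      obtain ⟨s, hs⟩ := hZ.desc (biprod.inr ≫ t) ((cancel_epi g').1 (by simpa using ht))
      exact ⟨s, biprod.hom_ext' _ _ (by simp [h1]) (by simp [hs])⟩
    obtain ⟨Y', b, c, k, q, hbc, hkq⟩ := SES.third_iso hY hF
    exact ⟨_, Y', b, c, inferInstance, hbc, ih hkq hX' hZ'⟩

lemma Cosyz.of_iso {n : ℕ} {X Y : 𝒜} (e : X ≅ Y) (h : Cosyz n Y) : Cosyz n X := by
  have ho : LeftOrth X := by
    intro Q hQ A B f g hfg φ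
    refine h.leftOrth Q hQ A B f (g ≫ e.hom) ?_ φ
    have := hfg.mono
    have := hfg.epi
    refine SES.of_lift (by rw [reassoc_of% hfg.zero, zero_comp]) fun T t ht => ?_
    exact hfg.lift t ((cancel_mono e.hom).1 (by simpa using ht))
  cases n with
  | zero => exact ho
  | succ n =>
    obtain ⟨-, P, X', i, p, hP, hip, hX'⟩ := h
    refine ⟨ho, P, X', e.hom ≫ i, p, hP, ?_, hX'⟩
    have := hip.mono
    have := hip.epi
    refine SES.of_desc (by simp [hip.zero]) fun T t ht => ?_
    exact hip.desc t ((cancel_epi e.hom).1 (by simpa using ht))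

/-! ### Gorenstein projective objects -/

lemma ses_image {A B C : 𝒜} {f : A ⟶ B} {g : B ⟶ C} {w : f ≫ g = 0}
    (h : (ShortComplex.mk f g w).Exact) : SES (image.ι f) (factorThruImage g) := by
  refine SES.of_desc ?_ fun T t ht => ?_
  · rw [← cancel_mono (image.ι g), ← cancel_epi (factorThruImage f)]
    simp [w]
  · have hft : f ≫ t = 0 := by rw [← image.fac f, Category.assoc, ht, comp_zero]
    have hk : kernel.ι (factorThruImage g) ≫ t = 0 := by
      obtain ⟨T', π, _, x, hx⟩ := h.exact_up_to_refinements (kernel.ι (factorThruImage g)) (by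
        show kernel.ι (factorThruImage g) ≫ g = 0
        have := kernel.condition (factorThruImage g) =≫ image.ι g
        rwa [Category.assoc, image.fac, zero_comp] at this)
      rw [← cancel_epi π, reassoc_of% hx]
      simp [hft]
    exact ⟨Abelian.epiDesc (factorThruImage g) t hk, Abelian.comp_epiDesc _ _ _⟩

theorem _root_.IsGorensteinProjective.cosyz {G : 𝒜} (hG : IsGorensteinProjective G) (n : ℕ) :
    Cosyz n G := by
  obtain ⟨P, d, hP, hex, hHom, ⟨e⟩⟩ := hG
  have ses (i : ℤ) : SES (image.ι (d (i + 1))) (factorThruImage (d i)) := ses_image (hex i).2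
  have orth (i : ℤ) : LeftOrth (image (d i)) := by
    have := hP (i + 1)
    refine LeftOrth.of_presentation (ses i) fun Q hQ φ => ?_
    obtain ⟨ψ, hψ⟩ := (hHom Q hQ (i + 1) (factorThruImage (d (i + 1)) ≫ φ)).1 (by
      have h0 : d (i + 1 + 1) ≫ factorThruImage (d (i + 1)) = 0 := by
        rw [← cancel_mono (image.ι (d (i + 1)))]
        simpa using (hex (i + 1)).1
      show d (i + 1 + 1) ≫ factorThruImage (d (i + 1)) ≫ φ = 0
      rw [reassoc_of% h0, zero_comp])
    refine ⟨ψ, ?_⟩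
    rw [← cancel_epi (factorThruImage (d (i + 1))), ← hψ, image.fac_assoc]
  have key (n : ℕ) : ∀ i : ℤ, Cosyz n (image (d i)) := by
    induction n with
    | zero => exact orth
    | succ n ih =>
      intro i
      obtain ⟨j, rfl⟩ : ∃ j, i = j + 1 := ⟨i - 1, by ring⟩
      exact ⟨orth _, _, _, _, _, hP _, ses j, ih j⟩
  exact (key n (-1)).of_iso e

/-- The complete resolution is the constant complex on `Q ⊞ Q` with differential
`(a, b) ↦ (b, 0)`. -/
lemma isGorensteinProjective_of_projective {Q : 𝒜} (hQ : Projective Q) :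
    IsGorensteinProjective Q := by
  have w : (biprod.snd ≫ biprod.inl : Q ⊞ Q ⟶ Q ⊞ Q) ≫
      (biprod.snd ≫ biprod.inl : Q ⊞ Q ⟶ Q ⊞ Q) = 0 := by simp
  refine ⟨fun _ => Q ⊞ Q, fun _ => biprod.snd ≫ biprod.inl, fun _ => inferInstance,
    fun _ => ⟨w, ?_⟩, fun R _ _ g => ⟨fun hg => ?_, ?_⟩, ⟨?_⟩⟩
  · rw [ShortComplex.exact_iff_exact_up_to_refinements]
    intro A x hx
    have hx' : x ≫ biprod.snd = 0 := by simpa using hx =≫ biprod.fst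
    refine ⟨A, 𝟙 A, inferInstance, x ≫ biprod.fst ≫ biprod.inr, biprod.hom_ext _ _ ?_ ?_⟩
    · simp
    · simpa using hx'
  · have hg' : biprod.inl ≫ g = 0 := by simpa using biprod.inr ≫= hg
    refine ⟨biprod.fst ≫ biprod.inr ≫ g, biprod.hom_ext' _ _ ?_ ?_⟩
    · simp [hg']
    · simp
  · rintro ⟨g, rfl⟩
    simp
  · exact (image.isoStrongEpiMono (biprod.snd : Q ⊞ Q ⟶ Q) biprod.inl rfl)

open ZeroObject in
lemma exists_epi_gorensteinProjective (L : 𝒜) :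
    ∃ (G : 𝒜) (p : L ⟶ G), Epi p ∧ IsGorensteinProjective G :=
  ⟨0, 0, inferInstance, isGorensteinProjective_of_projective inferInstance⟩

/-! ### Syzygies -/

lemma _root_.IsSyzygyOf.mono {c c' : 𝒜 → Prop} (hc : ∀ X, c X → c' X) {n : ℕ} :
    ∀ {N M : 𝒜}, IsSyzygyOf c (n + 1) N M → IsSyzygyOf c' (n + 1) N M := by
  induction n with
  | zero =>
    rintro N M ⟨G, f, g, w, h, hG⟩
    exact ⟨G, f, g, w, h, hc _ hG⟩
  | succ n ih =>
    rintro N M ⟨G, K, f, g, w, h, hG, hK⟩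
    exact ⟨G, K, f, g, w, h, hc _ hG, ih hK⟩

/-- An extension of an object of an extension-closed class `c` by a `c`-syzygy of `M` is again a
`c`-syzygy of `M`: only the leftmost term of the resolution changes, by pushout. -/
lemma _root_.IsSyzygyOf.of_extension {c : 𝒜 → Prop}
    (hc : ∀ {X Y Z : 𝒜} {u : X ⟶ Y} {v : Y ⟶ Z}, SES u v → c X → c Z → c Y)
    {n : ℕ} {K K' G' M : 𝒜} {k : K ⟶ K'} {q : K' ⟶ G'} (h : SES k q) (hQ : c G')
    (hK : IsSyzygyOf c (n + 1) K M) : IsSyzygyOf c (n + 1) K' M := by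
  cases n with
  | zero =>
    obtain ⟨G, f, g, w, hfg, hG⟩ := hK
    have sq := IsPushout.of_hasPushout k f
    obtain ⟨g', -, w', h'⟩ := SES.cobaseChange ⟨w, hfg⟩ sq
    obtain ⟨q', -, hq'⟩ := h.cobaseChange sq.flip
    exact ⟨_, _, g', w', h', hc hq' hG hQ⟩
  | succ n =>
    obtain ⟨G, L, f, g, w, hfg, hG, hL⟩ := hK
    have sq := IsPushout.of_hasPushout k f
    obtain ⟨g', -, w', h'⟩ := SES.cobaseChange ⟨w, hfg⟩ sq
    obtain ⟨q', -, hq'⟩ := h.cobaseChange sq.flip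
    exact ⟨_, L, _, g', w', h', hc hq' hG hQ, hL⟩

/-- Replaces the terms of a resolution by projectives, one at a time from the left; each
replacement costs one step of coresolution. -/
lemma exists_projective_syzygy {n : ℕ} : ∀ {N M : 𝒜},
    IsSyzygyOf (Cosyz (n + 1)) (n + 1) N M →
      ∃ L : 𝒜, IsSyzygyOf (fun P => Projective P) (n + 1) N L := by
  induction n with
  | zero =>
    rintro N M ⟨G, f, g, w, h, -, P, G', i, p, hP, hip, -⟩
    obtain ⟨L, b, c, -, -, ⟨w', hbc⟩, -⟩ := SES.third_iso ⟨w, h⟩ hip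
    exact ⟨L, P, b, c, w', hbc, hP⟩
  | succ n ih =>
    rintro N M ⟨G, K, f, g, w, h, ⟨-, P, G', i, p, hP, hip, hG'⟩, hK⟩
    obtain ⟨K', b, c, k, q, ⟨w', hbc⟩, hkq⟩ := SES.third_iso ⟨w, h⟩ hip
    obtain ⟨L, hL⟩ := ih ((hK.mono fun _ => Cosyz.pred).of_extension Cosyz.ext hkq hG')
    exact ⟨L, P, K', b, c, w', hbc, hP, hL⟩

end GorSyz

/-- **Theorem 3.10.** For a positive integer `n` and an object `N` of an abelian category with
enough projectives, the following are equivalent: (1) `N` is a Gorenstein `n`-syzygy of some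
object `M`; (2) there is an epimorphism `L ⟶ G` with `G` Gorenstein projective such that `N`
is an `n`-syzygy of `L`. -/
theorem gorenstein_syzygy_iff_syzygy {𝒜 : Type*} [Category 𝒜] [Abelian 𝒜] [EnoughProjectives 𝒜]
    (n : ℕ) (hn : 0 < n) (N : 𝒜) :
    (∃ M : 𝒜, IsSyzygyOf IsGorensteinProjective n N M) ↔
    (∃ (L G : 𝒜) (p : L ⟶ G), Epi p ∧ IsGorensteinProjective G ∧
      IsSyzygyOf (fun P => Projective P) n N L) := by
  obtain ⟨n, rfl⟩ := Nat.exists_eq_succ_of_ne_zero hn.ne'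
  constructor
  · rintro ⟨M, hM⟩
    obtain ⟨L, hL⟩ := GorSyz.exists_projective_syzygy (hM.mono fun _ hG => hG.cosyz (n + 1))
    obtain ⟨G, p, hp, hG⟩ := GorSyz.exists_epi_gorensteinProjective L
    exact ⟨L, G, p, hp, hG, hL⟩
  · rintro ⟨L, -, -, -, -, hL⟩
    exact ⟨L, hL.mono fun _ hP => GorSyz.isGorensteinProjective_of_projective hP⟩
end

section
/- Let 𝒜 be an abelian category with enough projectives. If 0 → N → G₀ → M → 0 is a short exact sequence in 𝒜 with G₀ Gorenstein projective, then there exist short exact sequences 0 → N → P₀ → L → 0 and 0 → M → L → G → 0 in 𝒜 with P₀ projective and G Gorenstein projective; in particular there is an epimorphism L → G with G Gorenstein projective such that N is a 1-syzygy of L. -/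
/-!
A Gorenstein projective object `G₀` embeds, by its complete resolution, into a projective `P₀`
with Gorenstein projective cokernel `G` (the next image in the same complex, seen as a complete
resolution after a shift); this is `IsGorensteinProjective.exists_shortExact`. Take `L` to be the
pushout of `G₀ ⟶ P₀` along `G₀ ⟶ M`. The pushout square identifies the cokernel of `N ⟶ G₀ ⟶ P₀`
with `L`, and the cokernel of the monomorphism `M ⟶ L` with that of `G₀ ⟶ P₀`, namely `G`.
-/

open CategoryTheory CategoryTheory.Limits

section Differential

variable {𝒜 : Type*} [Category 𝒜] {P : ℤ → 𝒜} (d : ∀ i : ℤ, P (i + 1) ⟶ P i)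

/-- The differential `P l ⟶ P k` for indices with `l = k + 1` only propositionally; this absorbs
the transports needed to reindex the complex. -/
def differential (k l : ℤ) (h : l = k + 1) : P l ⟶ P k :=
  eqToHom (congrArg P h) ≫ d k

lemma differential_self (k : ℤ) : differential d k (k + 1) rfl = d k := by
  simp [differential]

lemma differential_exact [Abelian 𝒜]
    (hd : ∀ i, ∃ w : d (i + 1) ≫ d i = 0, (ShortComplex.mk (d (i + 1)) (d i) w).Exact)
    (k l m : ℤ) (h : l = k + 1) (h' : m = l + 1) :
    ∃ w : differential d l m h' ≫ differential d k l h = 0,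
      (ShortComplex.mk (differential d l m h') (differential d k l h) w).Exact := by
  subst h h'
  simpa only [differential_self] using hd k

lemma differential_hom_exact [Abelian 𝒜] {Q : 𝒜}
    (hd : ∀ i : ℤ, Function.Exact (fun g : P i ⟶ Q => d i ≫ g)
      (fun g : P (i + 1) ⟶ Q => d (i + 1) ≫ g))
    (k l m : ℤ) (h : l = k + 1) (h' : m = l + 1) :
    Function.Exact (fun g : P k ⟶ Q => differential d k l h ≫ g)
      (fun g : P l ⟶ Q => differential d l m h' ≫ g) := by
  subst h h'
  simpa only [differential_self] using hd k

end Differential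

/-- A Gorenstein projective object is the kernel of an epimorphism from a projective object onto
a Gorenstein projective object. -/
lemma IsGorensteinProjective.exists_shortExact {𝒜 : Type*} [Category 𝒜] [Abelian 𝒜] {X : 𝒜}
    (hX : IsGorensteinProjective X) :
    ∃ (P₀ G : 𝒜) (j : X ⟶ P₀) (π : P₀ ⟶ G) (w : j ≫ π = 0),
      (ShortComplex.mk j π w).ShortExact ∧ Projective P₀ ∧ IsGorensteinProjective G := by
  obtain ⟨P, d, hP, hd, hQ, ⟨φ⟩⟩ := hX
  -- `δ` is the differential following `d (-1)`, with indices written as in the shifted complex.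
  let δ : P (-1) ⟶ P (-1 - 1) := differential d (-1 - 1) (-1) (by lia)
  obtain ⟨w, hw⟩ : ∃ w : d (-1) ≫ δ = 0, (ShortComplex.mk (d (-1)) δ w).Exact := by
    have := differential_exact d hd (-1 - 1) (-1) (-1 + 1) (by lia) rfl
    simpa only [differential_self] using this
  have w' : (φ.hom ≫ image.ι (d (-1))) ≫ factorThruImage δ = 0 := by
    rw [← cancel_mono (image.ι δ), ← cancel_epi φ.inv, ← cancel_epi (factorThruImage (d (-1)))]
    simpa using w
  refine ⟨P (-1), image δ, φ.hom ≫ image.ι (d (-1)), factorThruImage δ, w', ?_, hP _, ?_⟩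
  · refine { exact := ?_, mono_f := ?_, epi_g := ?_ }
    · -- Both complexes have the same image in, and the same kernel on, `P (-1)`.
      let α : ShortComplex.mk (d (-1)) (factorThruImage δ)
          (by rw [← cancel_mono (image.ι δ)]; simpa using w) ⟶
          ShortComplex.mk (φ.hom ≫ image.ι (d (-1))) (factorThruImage δ) w' :=
        { τ₁ := factorThruImage (d (-1)) ≫ φ.inv
          τ₂ := 𝟙 _
          τ₃ := 𝟙 _ }
      let β : ShortComplex.mk (d (-1)) (factorThruImage δ)
          (by rw [← cancel_mono (image.ι δ)]; simpa using w) ⟶ ShortComplex.mk (d (-1)) δ w :=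
        { τ₁ := 𝟙 _
          τ₂ := 𝟙 _
          τ₃ := image.ι δ }
      have : Epi α.τ₁ := by dsimp only [α]; infer_instance
      have : IsIso α.τ₂ := by dsimp only [α]; infer_instance
      have : Mono α.τ₃ := by dsimp only [α]; infer_instance
      have : Epi β.τ₁ := by dsimp only [β]; infer_instance
      have : IsIso β.τ₂ := by dsimp only [β]; infer_instance
      have : Mono β.τ₃ := by dsimp only [β]; infer_instance
      exact (ShortComplex.exact_iff_of_epi_of_isIso_of_mono α).1
        ((ShortComplex.exact_iff_of_epi_of_isIso_of_mono β).2 hw)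
    · dsimp only; infer_instance
    · dsimp only; infer_instance
  · refine ⟨fun i => P (i - 1), fun i => differential d (i - 1) (i + 1 - 1) (by lia),
      fun i => hP _, fun i => differential_exact d hd _ _ _ _ _,
      fun Q hQP i => differential_hom_exact d (hQ Q hQP) _ _ _ _ _, ?_⟩
    have key : ∀ (l : ℤ) (hl : l = -1) (h : l = -1 - 1 + 1),
        Nonempty (image δ ≅ image (differential d (-1 - 1) l h)) := by
      rintro _ rfl h
      exact ⟨Iso.refl _⟩
    exact key _ (by lia) _

/-- If `0 → N → G₀ → M → 0` is a short exact sequence with `G₀` Gorenstein projective, then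
there are short exact sequences `0 → N → P₀ → L → 0` and `0 → M → L → G → 0` with `P₀`
projective and `G` Gorenstein projective; in particular there is an epimorphism `L ⟶ G`
with `G` Gorenstein projective such that `N` is a 1-syzygy of `L`. -/
theorem gorenstein_one_syzygy {𝒜 : Type*} [Category 𝒜] [Abelian 𝒜] [EnoughProjectives 𝒜]
    {N G₀ M : 𝒜} (f : N ⟶ G₀) (g : G₀ ⟶ M) (w : f ≫ g = 0)
    (hse : (ShortComplex.mk f g w).ShortExact) (hG₀ : IsGorensteinProjective G₀) :
    ∃ (P₀ L G : 𝒜) (a : N ⟶ P₀) (b : P₀ ⟶ L) (c : M ⟶ L) (e : L ⟶ G)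
      (w₁ : a ≫ b = 0) (w₂ : c ≫ e = 0),
      (ShortComplex.mk a b w₁).ShortExact ∧ (ShortComplex.mk c e w₂).ShortExact ∧
      Projective P₀ ∧ IsGorensteinProjective G ∧ Epi e ∧
      IsSyzygyOf (fun P => Projective P) 1 N L := by
  obtain ⟨P₀, G, j, π, wj, hj, hP, hG⟩ := hG₀.exists_shortExact
  have := hse.mono_f
  have := hse.epi_g
  have := hj.mono_f
  have := hj.epi_g
  dsimp only at *
  have w₁ : (f ≫ j) ≫ pushout.inl j g = 0 := by
    rw [Category.assoc, pushout.condition, ← Category.assoc, w, zero_comp]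
  have w₀ : j ≫ π = g ≫ (0 : M ⟶ G) := by rw [wj, comp_zero]
  have w₂ : pushout.inr j g ≫ pushout.desc π 0 w₀ = 0 := pushout.inr_desc _ _ _
  have he : Epi (pushout.desc π 0 w₀) := by
    have : Epi (pushout.inl j g ≫ pushout.desc π 0 w₀) := by
      rw [pushout.inl_desc]; infer_instance
    exact epi_of_epi (pushout.inl j g) _
  -- A map out of `P₀` killing `N` restricts on `G₀` to a map factoring through `M`,
  -- so it extends to the pushout: `inl` is the cokernel of `f ≫ j`.
  have hb : (ShortComplex.mk (f ≫ j) (pushout.inl j g) w₁).ShortExact := by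
    refine { exact := ?_, mono_f := ?_, epi_g := ?_ }
    · refine ShortComplex.exact_of_g_is_cokernel _
        (CokernelCofork.IsColimit.ofπ' _ _ fun {Z} k hk => ?_)
      have hk' : f ≫ j ≫ k = 0 := by rw [← Category.assoc]; exact hk
      let s := hse.exact.desc (j ≫ k) hk'
      have hs : g ≫ s = j ≫ k := hse.exact.g_desc (j ≫ k) hk'
      exact ⟨pushout.desc k s hs.symm, pushout.inl_desc _ _ _⟩
    · dsimp only; infer_instance
    · dsimp only; infer_instance
  -- A map out of the pushout killing `M` is zero on `G₀`, so it factors through `G`.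
  have hc : (ShortComplex.mk (pushout.inr j g) (pushout.desc π 0 w₀) w₂).ShortExact := by
    refine { exact := ?_, mono_f := ?_, epi_g := he }
    · refine ShortComplex.exact_of_g_is_cokernel _
        (CokernelCofork.IsColimit.ofπ' _ _ fun {Z} k hk => ?_)
      dsimp only at k hk
      have hk' : j ≫ pushout.inl j g ≫ k = 0 := by
        rw [pushout.condition_assoc, hk, comp_zero]
      let s := hj.exact.desc _ hk'
      have hs : π ≫ s = pushout.inl j g ≫ k := hj.exact.g_desc _ hk'
      refine ⟨s, pushout.hom_ext ?_ ?_⟩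
      · dsimp only
        rw [pushout.inl_desc_assoc, hs]
      · dsimp only
        rw [pushout.inr_desc_assoc, zero_comp, hk]
    · dsimp only; infer_instance
  exact ⟨P₀, pushout j g, G, f ≫ j, pushout.inl j g, pushout.inr j g, pushout.desc π 0 w₀,
    w₁, w₂, hb, hc, hP, hG, he, P₀, f ≫ j, pushout.inl j g, w₁, hb, hP⟩
end
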